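/- Let f be a real-analytic 2π-periodic positive function and let k > 0. If ∫_{-π}^{π} f'(φ) f(φ) (k f(φ) cos φ)^j e^{i k f(φ) sin φ} dφ = 0 for every integer j ≥ 0, then f is constant. -/

import Mathlib

open MeasureTheory Real

/-!
In the plane curve `X = f cos φ`, `Y = f sin φ`, the integrand of the `j`-th moment condition is a
multiple of `X^j (f²)' e^{ikY}`. By Weierstrass approximation, the vanishing of all moments means
that the measure `(f²)' e^{ikY} dφ` has zero pushforward under `X`. Every `t` near `0` has exactly
two preimages under `X` in `(-π, π)`, one near `π/2` and one near `-π/2`. Writing `yᵢ(t)` for the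
values of `Y` there and `ρᵢ = t² + yᵢ²` for those of `f²`, the pushforward has density
`± ρ₁' e^{iky₁} ± ρ₂' e^{iky₂}` near `0`, so `ρ₁'² = ρ₂'²` and `ρ₁' sin(k(y₁ - y₂)) = 0`.

By analyticity either `ρ₁' = 0` or `y₁ - y₂` is a constant `c`, and `c ≠ 0` since `y₂ < 0 < y₁`. In
the second case `ρ₁' - ρ₂' = 2cy₁'` and `(ρ₁' - ρ₂')(ρ₁' + ρ₂') = 0`, so that either `y₁' = 0`, or
`ρ₁' = cy₁'` and `ρ₂' = -cy₂'`. These identities between derivatives continue analytically to the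
whole curve, where they read `(f²)' = 0`, or `Y' = 0`, or `(f²)' = cY' = -cY'`. The last two make
`Y` constant, although `Y(0) = 0 < Y(π/2)`.
-/

open Set Filter Topology

section Moments

variable {α E : Type*} [MeasurableSpace α] {μ : Measure α} [NormedAddCommGroup E] [NormedSpace ℝ E]
  {X : α → ℝ} {H : α → E} {C : ℝ} {g : ℝ → ℝ}

lemma integrable_comp_smul_of_abs_le (hX : AEStronglyMeasurable X μ) (hXC : ∀ᵐ a ∂μ, |X a| ≤ C)
    (hH : Integrable H μ) (hg : Continuous g) : Integrable (fun a ↦ g (X a) • H a) μ := by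
  obtain ⟨D, hD⟩ :=
    (isCompact_Icc (a := -C) (b := C)).exists_bound_of_continuousOn hg.continuousOn
  exact hH.bdd_smul D (hg.comp_aestronglyMeasurable hX)
    (hXC.mono fun a ha ↦ hD _ (abs_le.1 ha))

lemma integral_eval_smul_eq_zero_of_integral_pow_smul_eq_zero (hX : AEStronglyMeasurable X μ)
    (hXC : ∀ᵐ a ∂μ, |X a| ≤ C) (hH : Integrable H μ)
    (hmom : ∀ j : ℕ, ∫ a, X a ^ j • H a ∂μ = 0) (p : Polynomial ℝ) :
    ∫ a, p.eval (X a) • H a ∂μ = 0 := by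
  simp_rw [Polynomial.eval_eq_sum_range, Finset.sum_smul, mul_smul]
  rw [integral_finsetSum]
  · simp_rw [integral_smul, hmom, smul_zero, Finset.sum_const_zero]
  · exact fun j _ ↦ (integrable_comp_smul_of_abs_le hX hXC hH (continuous_pow j)).fun_smul _

theorem integral_comp_smul_eq_zero_of_integral_pow_smul_eq_zero (hX : AEStronglyMeasurable X μ)
    (hXC : ∀ᵐ a ∂μ, |X a| ≤ C) (hH : Integrable H μ)
    (hmom : ∀ j : ℕ, ∫ a, X a ^ j • H a ∂μ = 0) (hg : Continuous g) :
    ∫ a, g (X a) • H a ∂μ = 0 := by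
  set M := ∫ a, ‖H a‖ ∂μ
  have hM : 0 < M + 1 :=
    add_pos_of_nonneg_of_pos (integral_nonneg fun a ↦ norm_nonneg _) one_pos
  refine norm_le_zero_iff.1 (le_of_forall_pos_le_add fun ε hε ↦ ?_)
  obtain ⟨p, hp⟩ := exists_polynomial_near_of_continuousOn (-C) C g hg.continuousOn
    (ε / (M + 1)) (div_pos hε hM)
  calc ‖∫ a, g (X a) • H a ∂μ‖
      = ‖∫ a, (g (X a) • H a - p.eval (X a) • H a) ∂μ‖ := by
        rw [integral_sub (integrable_comp_smul_of_abs_le hX hXC hH hg)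
          (integrable_comp_smul_of_abs_le hX hXC hH p.continuous),
          integral_eval_smul_eq_zero_of_integral_pow_smul_eq_zero hX hXC hH hmom, sub_zero]
    _ ≤ ∫ a, ε / (M + 1) * ‖H a‖ ∂μ := by
        refine norm_integral_le_of_norm_le (hH.norm.const_mul _) (hXC.mono fun a ha ↦ ?_)
        rw [← sub_smul, norm_smul, norm_sub_rev]
        exact mul_le_mul_of_nonneg_right (hp _ (abs_le.1 ha)).le (norm_nonneg _)
    _ = ε / (M + 1) * M := integral_const_mul _ _
    _ ≤ 0 + ε := by
        rw [zero_add, div_mul_eq_mul_div, div_le_iff₀ hM]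
        gcongr
        exact (lt_add_one M).le

end Moments

/-- `ψ` is the analytic inverse branch over `U` of the restriction of `X` to `s`: every value
`t ∈ U` is taken by `X` exactly once on `s`, at `ψ t`. Nothing is required of `ψ` outside `U`. -/
structure IsInverseBranch (X ψ : ℝ → ℝ) (s U : Set ℝ) : Prop where
  isOpen_source : IsOpen s
  isOpen_target : IsOpen U
  mapsTo : MapsTo ψ U s
  leftInvOn : LeftInvOn ψ X (s ∩ X ⁻¹' U)
  rightInvOn : RightInvOn ψ X U
  analyticOnNhd : AnalyticOnNhd ℝ ψ U

theorem exists_isInverseBranch {X : ℝ → ℝ} {K s : Set ℝ} {c : ℝ} (hK : IsCompact K)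
    (hXK : ContinuousOn X K) (hs : IsOpen s) (hsK : s ⊆ K) (hcs : c ∈ s)
    (hX : AnalyticAt ℝ X c) (hX' : deriv X c ≠ 0) (hc : ∀ φ ∈ K, X φ = X c → φ = c) :
    ∃ ψ, ∃ U ∈ 𝓝 (X c), IsInverseBranch X ψ s U := by
  have hd := hX.hasStrictDerivAt
  set ψ := hd.localInverse X (deriv X c) c hX'
  have hψ : AnalyticAt ℝ ψ (X c) := hX.analyticAt_localInverse hX'
  have hψc : ψ (X c) = c := HasStrictFDerivAt.localInverse_apply_image ..
  obtain ⟨V, hV, hVo, hcV⟩ := eventually_nhds_iff.1 (hd.eventually_left_inverse hX')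
  have hfar : ∀ᶠ t in 𝓝 (X c), t ∉ X '' (K \ V) := by
    have hcpt : IsCompact (X '' (K \ V)) :=
      (hK.diff hVo).image_of_continuousOn (hXK.mono sdiff_subset)
    refine hcpt.isClosed.isOpen_compl.mem_nhds ?_
    rintro ⟨φ, hφ, hφc⟩
    exact hφ.2 (hc φ hφ.1 hφc ▸ hcV)
  have hnear : ∀ᶠ t in 𝓝 (X c), ψ t ∈ s :=
    hψ.continuousAt.eventually_mem (hψc.symm ▸ hs.mem_nhds hcs)
  obtain ⟨U, hU, hUo, hcU⟩ := eventually_nhds_iff.1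
    (((hfar.and hnear).and (hd.eventually_right_inverse hX')).and hψ.eventually_analyticAt)
  refine ⟨ψ, U, hUo.mem_nhds hcU, hs, hUo, fun t ht ↦ (hU t ht).1.1.2, fun φ hφ ↦ hV φ ?_,
    fun t ht ↦ (hU t ht).1.2, fun t ht ↦ (hU t ht).2⟩
  by_contra hφV
  exact (hU _ hφ.2).1.1.1 ⟨φ, ⟨hsK hφ.1, hφV⟩, rfl⟩

namespace IsInverseBranch

variable {X ψ : ℝ → ℝ} {s U V : Set ℝ}

lemma mono (h : IsInverseBranch X ψ s U) (hV : IsOpen V) (hVU : V ⊆ U) :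
    IsInverseBranch X ψ s V where
  isOpen_source := h.isOpen_source
  isOpen_target := hV
  mapsTo := h.mapsTo.mono_left hVU
  leftInvOn := h.leftInvOn.mono (inter_subset_inter_right _ (preimage_mono hVU))
  rightInvOn := fun _ ht ↦ h.rightInvOn (hVU ht)
  analyticOnNhd := h.analyticOnNhd.mono hVU

lemma injOn (h : IsInverseBranch X ψ s U) : InjOn ψ U := h.rightInvOn.injOn

lemma image_eq_inter_preimage (h : IsInverseBranch X ψ s U) : ψ '' U = s ∩ X ⁻¹' U := by
  refine Subset.antisymm ?_ fun φ hφ ↦ ⟨X φ, hφ.2, h.leftInvOn hφ⟩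
  rintro _ ⟨t, ht, rfl⟩
  exact ⟨h.mapsTo ht, by rwa [mem_preimage, h.rightInvOn ht]⟩

lemma hasDerivAt (h : IsInverseBranch X ψ s U) {t : ℝ} (ht : t ∈ U) :
    HasDerivAt ψ (deriv ψ t) t :=
  (h.analyticOnNhd t ht).differentiableAt.hasDerivAt

lemma deriv_comp (h : IsInverseBranch X ψ s U) {F : ℝ → ℝ} (hF : Differentiable ℝ F) {t : ℝ}
    (ht : t ∈ U) : deriv (F ∘ ψ) t = deriv F (ψ t) * deriv ψ t :=
  _root_.deriv_comp t (hF _) (h.hasDerivAt ht).differentiableAt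

lemma deriv_ne_zero (h : IsInverseBranch X ψ s U) (hX : Differentiable ℝ X) {t : ℝ}
    (ht : t ∈ U) : deriv ψ t ≠ 0 := by
  have hid : X ∘ ψ =ᶠ[𝓝 t] id :=
    eventually_of_mem (h.isOpen_target.mem_nhds ht) fun u hu ↦ h.rightInvOn hu
  refine right_ne_zero_of_mul_eq_one (a := deriv X (ψ t)) ?_
  rw [← h.deriv_comp hX ht, hid.deriv_eq, deriv_id]

theorem eq_zero_of_comp_eqOn_zero (h : IsInverseBranch X ψ s U) (hU : U.Nonempty)
    (hX : Continuous X) {F : ℝ → ℝ} (hF : AnalyticOnNhd ℝ F univ) (hFψ : EqOn (F ∘ ψ) 0 U) :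
    F = 0 := by
  obtain ⟨t, ht⟩ := hU
  have hnhds : s ∩ X ⁻¹' U ∈ 𝓝 (ψ t) :=
    (h.isOpen_source.inter (h.isOpen_target.preimage hX)).mem_nhds
      (h.image_eq_inter_preimage ▸ mem_image_of_mem ψ ht)
  refine hF.eq_of_eventuallyEq (z₀ := ψ t) analyticOnNhd_const (eventually_of_mem hnhds ?_)
  rw [← h.image_eq_inter_preimage]
  rintro _ ⟨u, hu, rfl⟩
  exact hFψ hu

theorem deriv_eq_const_mul_deriv (h : IsInverseBranch X ψ s U) (hU : U.Nonempty)
    (hX : Differentiable ℝ X) {F G : ℝ → ℝ} (hF : AnalyticOnNhd ℝ F univ)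
    (hG : AnalyticOnNhd ℝ G univ) {c : ℝ}
    (hFG : ∀ t ∈ U, deriv (F ∘ ψ) t = c * deriv (G ∘ ψ) t) (φ : ℝ) :
    deriv F φ = c * deriv G φ := by
  have hdiff {F : ℝ → ℝ} (hF : AnalyticOnNhd ℝ F univ) : Differentiable ℝ F :=
    fun x ↦ (hF x trivial).differentiableAt
  have hzero : deriv F - (fun φ ↦ c * deriv G φ) = 0 := by
    refine h.eq_zero_of_comp_eqOn_zero hU hX.continuous
      (hF.deriv.sub (analyticOnNhd_const.mul hG.deriv)) fun t ht ↦ ?_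
    have := hFG t ht
    rw [h.deriv_comp (hdiff hF) ht, h.deriv_comp (hdiff hG) ht, ← mul_assoc] at this
    exact sub_eq_zero.2 (mul_right_cancel₀ (h.deriv_ne_zero hX ht) this)
  exact sub_eq_zero.1 (congrFun hzero φ)

variable {E : Type*} [NormedAddCommGroup E] [NormedSpace ℝ E] {H : ℝ → E}

lemma integrableOn_abs_deriv_smul (h : IsInverseBranch X ψ s U) (hH : IntegrableOn H s) :
    IntegrableOn (fun t ↦ |deriv ψ t| • H (ψ t)) U :=
  (integrableOn_image_iff_integrableOn_abs_deriv_smul h.isOpen_target.measurableSet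
    (fun _ ht ↦ (h.hasDerivAt ht).hasDerivWithinAt) h.injOn H).1
    (hH.mono_set h.mapsTo.image_subset)

theorem setIntegral_comp_smul (h : IsInverseBranch X ψ s U) {g : ℝ → ℝ}
    (hg : ∀ t ∉ U, g t = 0) :
    ∫ φ in s, g (X φ) • H φ = ∫ t in U, g t • |deriv ψ t| • H (ψ t) := by
  calc ∫ φ in s, g (X φ) • H φ
      = ∫ φ in ψ '' U, g (X φ) • H φ := by
        refine setIntegral_eq_of_subset_of_forall_sdiff_eq_zero h.isOpen_source.measurableSet
          h.mapsTo.image_subset fun φ hφ ↦ ?_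
        rw [h.image_eq_inter_preimage] at hφ
        rw [hg _ fun hφU ↦ hφ.2 ⟨hφ.1, hφU⟩, zero_smul]
    _ = ∫ t in U, |deriv ψ t| • g (X (ψ t)) • H (ψ t) :=
        integral_image_eq_integral_abs_deriv_smul h.isOpen_target.measurableSet
          (fun _ ht ↦ (h.hasDerivAt ht).hasDerivWithinAt) h.injOn _
    _ = ∫ t in U, g t • |deriv ψ t| • H (ψ t) := by
        refine setIntegral_congr_fun h.isOpen_target.measurableSet fun t ht ↦ ?_
        simp only [h.rightInvOn ht, smul_comm (g t)]

lemma continuousOn_abs_deriv_smul (h : IsInverseBranch X ψ s U) (hH : ContinuousOn H s) :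
    ContinuousOn (fun t ↦ |deriv ψ t| • H (ψ t)) U :=
  h.analyticOnNhd.deriv.continuousOn.abs.smul
    (hH.comp h.analyticOnNhd.continuousOn h.mapsTo)

lemma integrableOn_smul_abs_deriv_smul (h : IsInverseBranch X ψ s U) {g : ℝ → ℝ}
    (hint : IntegrableOn (fun φ ↦ g (X φ) • H φ) s) :
    IntegrableOn (fun t ↦ g t • |deriv ψ t| • H (ψ t)) U := by
  refine (h.integrableOn_abs_deriv_smul hint).congr_fun (fun t ht ↦ ?_)
    h.isOpen_target.measurableSet
  simp only [h.rightInvOn ht, smul_comm (g t)]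

variable {ψ₁ ψ₂ : ℝ → ℝ} {s₁ s₂ : Set ℝ}

theorem setIntegral_union_comp_smul (h₁ : IsInverseBranch X ψ₁ s₁ U)
    (h₂ : IsInverseBranch X ψ₂ s₂ U) (hs : Disjoint s₁ s₂) {g : ℝ → ℝ}
    (hg : ∀ t ∉ U, g t = 0) (hint : IntegrableOn (fun φ ↦ g (X φ) • H φ) (s₁ ∪ s₂)) :
    ∫ φ in s₁ ∪ s₂, g (X φ) • H φ =
      ∫ t in U, g t • (|deriv ψ₁ t| • H (ψ₁ t) + |deriv ψ₂ t| • H (ψ₂ t)) := by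
  have hint₁ := hint.mono_set subset_union_left
  have hint₂ := hint.mono_set subset_union_right
  simp_rw [smul_add]
  rw [setIntegral_union hs h₂.isOpen_source.measurableSet hint₁ hint₂,
    h₁.setIntegral_comp_smul hg, h₂.setIntegral_comp_smul hg,
    integral_add (h₁.integrableOn_smul_abs_deriv_smul hint₁)
      (h₂.integrableOn_smul_abs_deriv_smul hint₂)]

theorem abs_deriv_smul_add_abs_deriv_smul_eq_zero [CompleteSpace E] {C : ℝ}
    (h₁ : IsInverseBranch X ψ₁ s₁ U) (h₂ : IsInverseBranch X ψ₂ s₂ U) (hs : Disjoint s₁ s₂)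
    (hX : Continuous X) (hXC : ∀ φ ∈ s₁ ∪ s₂, |X φ| ≤ C) (hH : Continuous H)
    (hHs : IntegrableOn H (s₁ ∪ s₂)) (hmom : ∀ j : ℕ, ∫ φ in s₁ ∪ s₂, X φ ^ j • H φ = 0)
    {t : ℝ} (ht : t ∈ U) :
    |deriv ψ₁ t| • H (ψ₁ t) + |deriv ψ₂ t| • H (ψ₂ t) = 0 := by
  have hU := h₁.isOpen_target
  have hXC' : ∀ᵐ φ ∂volume.restrict (s₁ ∪ s₂), |X φ| ≤ C :=
    ae_restrict_of_forall_mem (h₁.isOpen_source.union h₂.isOpen_source).measurableSet hXC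
  have hcont : ContinuousOn
      (fun t ↦ |deriv ψ₁ t| • H (ψ₁ t) + |deriv ψ₂ t| • H (ψ₂ t)) U :=
    (h₁.continuousOn_abs_deriv_smul hH.continuousOn).add
      (h₂.continuousOn_abs_deriv_smul hH.continuousOn)
  have hae : ∀ᵐ t, t ∈ U → |deriv ψ₁ t| • H (ψ₁ t) + |deriv ψ₂ t| • H (ψ₂ t) = 0 := by
    refine hU.ae_eq_zero_of_integral_contDiff_smul_eq_zero
      (hcont.locallyIntegrableOn hU.measurableSet) fun g hg _ hgU ↦ ?_
    have hg0 : ∀ t ∉ U, g t = 0 := fun t ht ↦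
      image_eq_zero_of_notMem_tsupport fun h ↦ ht (hgU h)
    rw [← setIntegral_eq_integral_of_forall_compl_eq_zero (s := U)
        fun t ht ↦ by rw [hg0 t ht, zero_smul],
      ← h₁.setIntegral_union_comp_smul h₂ hs hg0
        (integrable_comp_smul_of_abs_le hX.aestronglyMeasurable hXC' hHs hg.continuous)]
    exact integral_comp_smul_eq_zero_of_integral_pow_smul_eq_zero hX.aestronglyMeasurable hXC'
      hHs hmom hg.continuous
  exact Measure.eqOn_open_of_ae_eq ((ae_restrict_iff' hU.measurableSet).2 hae) hU hcont
    continuousOn_const ht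

end IsInverseBranch

lemma eq_of_sin_eq_zero_of_isPreconnected {α : Type*} [TopologicalSpace α] {s : Set α}
    (hs : IsPreconnected s) {u : α → ℝ} (hu : ContinuousOn u s) (hsin : ∀ x ∈ s, sin (u x) = 0)
    {x y : α} (hx : x ∈ s) (hy : y ∈ s) : u x = u y := by
  have hcount : {r : ℝ | sin r = 0}.Countable := by
    simp_rw [sin_eq_zero_iff]
    exact countable_range _
  exact hcount.isTotallyDisconnected (u '' s) (image_subset_iff.2 hsin) (hs.image u hu)
    (mem_image_of_mem u hx) (mem_image_of_mem u hy)

lemma sq_eq_sq_and_mul_sin_sub_eq_zero_of_add_exp_eq_zero {a b p q : ℝ}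
    (h : (a : ℂ) * Complex.exp (Complex.I * p) + b * Complex.exp (Complex.I * q) = 0) :
    a ^ 2 = b ^ 2 ∧ a * sin (p - q) = 0 := by
  have hrot : (a : ℂ) * Complex.exp ((p - q : ℝ) * Complex.I) = (-b : ℝ) := by
    have hsplit : Complex.exp (Complex.I * p) =
        Complex.exp ((p - q : ℝ) * Complex.I) * Complex.exp (Complex.I * q) := by
      rw [← Complex.exp_add]
      push_cast
      ring_nf
    rw [hsplit, ← mul_assoc, ← add_mul] at h
    rw [Complex.ofReal_neg]
    exact eq_neg_of_add_eq_zero_left ((mul_eq_zero.1 h).resolve_right (Complex.exp_ne_zero _))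
  constructor
  · have := congrArg norm hrot
    rw [norm_mul, Complex.norm_exp_ofReal_mul_I, mul_one, Complex.norm_real, Complex.norm_real,
      norm_neg] at this
    exact (sq_eq_sq_iff_abs_eq_abs _ _).2 this
  · have := congrArg Complex.im hrot
    rwa [Complex.im_ofReal_mul, Complex.exp_ofReal_mul_I_im, Complex.ofReal_im] at this

section Alternative

variable {U : Set ℝ} {ρ₁ ρ₂ y₁ y₂ : ℝ → ℝ} {c k : ℝ}

lemma deriv_eq_zero_or_deriv_eq_const_mul_of_sub_eq_const (hU : IsOpen U)
    (hUc : IsPreconnected U) (hρ₁ : AnalyticOnNhd ℝ ρ₁ U) (hρ₂ : AnalyticOnNhd ℝ ρ₂ U)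
    (hy₁ : AnalyticOnNhd ℝ y₁ U) (hc : c ≠ 0)
    (hyc : ∀ t ∈ U, y₁ t - y₂ t = c) (hρy : ∀ t ∈ U, ρ₁ t - ρ₂ t = y₁ t ^ 2 - y₂ t ^ 2)
    (hsq : ∀ t ∈ U, deriv ρ₁ t ^ 2 = deriv ρ₂ t ^ 2) :
    (∀ t ∈ U, deriv y₁ t = 0) ∨
      (∀ t ∈ U, deriv ρ₁ t = c * deriv y₁ t) ∧ ∀ t ∈ U, deriv ρ₂ t = -c * deriv y₂ t := by
  have hy' : ∀ t ∈ U, deriv y₁ t = deriv y₂ t := fun t ht ↦ by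
    have hev : y₁ =ᶠ[𝓝 t] fun u ↦ y₂ u + c := eventually_of_mem (hU.mem_nhds ht) fun u hu ↦
      sub_eq_iff_eq_add'.1 (hyc u hu)
    rw [hev.deriv_eq, deriv_add_const]
  have hρ' : ∀ t ∈ U, deriv ρ₁ t - deriv ρ₂ t = 2 * c * deriv y₁ t := fun t ht ↦ by
    have hev : ρ₁ =ᶠ[𝓝 t] fun u ↦ ρ₂ u + c * (2 * y₁ u - c) :=
      eventually_of_mem (hU.mem_nhds ht) fun u hu ↦ by
        linear_combination hρy u hu + (y₁ u + y₂ u - c) * hyc u hu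
    have hderiv := (hρ₂ t ht).differentiableAt.hasDerivAt.fun_add
      ((((hy₁ t ht).differentiableAt.hasDerivAt.const_mul 2).sub_const c).const_mul c)
    rw [hev.deriv_eq, hderiv.deriv]
    ring
  have hmul : ∀ t ∈ U, (deriv y₁ * (deriv ρ₁ + deriv ρ₂)) t = 0 := fun t ht ↦ by
    refine (mul_eq_zero.1 ?_).resolve_left (mul_ne_zero two_ne_zero hc)
    simp only [Pi.mul_apply, Pi.add_apply]
    linear_combination hsq t ht - (deriv ρ₁ t + deriv ρ₂ t) * hρ' t ht
  refine (hy₁.deriv.eq_zero_or_eq_zero_of_mul_eq_zero (hρ₁.deriv.add hρ₂.deriv) hmul hUc).imp id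
    fun (hadd : ∀ t ∈ U, deriv ρ₁ t + deriv ρ₂ t = 0) ↦ ⟨fun t ht ↦ ?_, fun t ht ↦ ?_⟩
  · linear_combination (hρ' t ht + hadd t ht) / 2
  · linear_combination (hadd t ht - hρ' t ht) / 2 - c * hy' t ht

theorem deriv_eq_zero_or_exists_deriv_eq_const_mul (hU : IsOpen U) (hUc : IsPreconnected U)
    (hρ₁ : AnalyticOnNhd ℝ ρ₁ U) (hρ₂ : AnalyticOnNhd ℝ ρ₂ U)
    (hy₁ : AnalyticOnNhd ℝ y₁ U) (hy₂ : AnalyticOnNhd ℝ y₂ U) (hk : k ≠ 0)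
    (hy : ∀ t ∈ U, y₁ t ≠ y₂ t) (hρy : ∀ t ∈ U, ρ₁ t - ρ₂ t = y₁ t ^ 2 - y₂ t ^ 2)
    (hsq : ∀ t ∈ U, deriv ρ₁ t ^ 2 = deriv ρ₂ t ^ 2)
    (hsin : ∀ t ∈ U, deriv ρ₁ t * sin (k * (y₁ t - y₂ t)) = 0) :
    (∀ t ∈ U, deriv ρ₁ t = 0) ∨ (∀ t ∈ U, deriv y₁ t = 0) ∨
      ∃ c ≠ 0, (∀ t ∈ U, deriv ρ₁ t = c * deriv y₁ t) ∧
        ∀ t ∈ U, deriv ρ₂ t = -c * deriv y₂ t := by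
  rcases U.eq_empty_or_nonempty with rfl | ⟨t₀, ht₀⟩
  · simp
  have hu : AnalyticOnNhd ℝ (fun t ↦ k * (y₁ t - y₂ t)) U := analyticOnNhd_const.mul (hy₁.sub hy₂)
  have hsu : AnalyticOnNhd ℝ (fun t ↦ sin (k * (y₁ t - y₂ t))) U :=
    analyticOnNhd_sin.comp hu (mapsTo_univ _ _)
  refine (hρ₁.deriv.eq_zero_or_eq_zero_of_mul_eq_zero hsu hsin hUc).imp id fun hsin0 ↦ ?_
  have hconst : ∀ t ∈ U, y₁ t - y₂ t = y₁ t₀ - y₂ t₀ := fun t ht ↦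
    mul_left_cancel₀ hk (eq_of_sin_eq_zero_of_isPreconnected hUc hu.continuousOn hsin0 ht ht₀)
  have hc := sub_ne_zero.2 (hy t₀ ht₀)
  exact (deriv_eq_zero_or_deriv_eq_const_mul_of_sub_eq_const hU hUc hρ₁ hρ₂ hy₁ hc hconst hρy
    hsq).imp id fun h ↦ ⟨_, hc, h⟩

end Alternative

section Curve

/-- The density `R' e^{ikY}`, in a parameter of the plane curve `(X, Y)`, whose moments against `X`
are taken. The squared radius `R = X² + Y²` is an argument because only `R'` and `Y` enter. -/
noncomputable def phaseDensity (k : ℝ) (R Y : ℝ → ℝ) (φ : ℝ) : ℂ :=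
  (deriv R φ : ℝ) * Complex.exp (Complex.I * (k * Y φ : ℝ))

variable {X Y R ψ₁ ψ₂ : ℝ → ℝ} {s₁ s₂ U : Set ℝ} {k : ℝ}

lemma IsInverseBranch.sq_deriv_comp_eq_and_mul_sin_eq_zero (h₁ : IsInverseBranch X ψ₁ s₁ U)
    (h₂ : IsInverseBranch X ψ₂ s₂ U) (hR : Differentiable ℝ R) {t : ℝ} (ht : t ∈ U)
    (h : |deriv ψ₁ t| • phaseDensity k R Y (ψ₁ t) + |deriv ψ₂ t| • phaseDensity k R Y (ψ₂ t) = 0) :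
    deriv (R ∘ ψ₁) t ^ 2 = deriv (R ∘ ψ₂) t ^ 2 ∧
      deriv (R ∘ ψ₁) t * sin (k * (Y (ψ₁ t) - Y (ψ₂ t))) = 0 := by
  simp only [phaseDensity, Complex.real_smul, ← mul_assoc, ← Complex.ofReal_mul] at h
  obtain ⟨hsq, hsin⟩ := sq_eq_sq_and_mul_sin_sub_eq_zero_of_add_exp_eq_zero h
  rw [h₁.deriv_comp hR ht, h₂.deriv_comp hR ht]
  constructor
  · simpa only [mul_pow, sq_abs, mul_comm] using hsq
  · rw [← mul_sub, mul_eq_zero, mul_eq_zero, abs_eq_zero] at hsin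
    rwa [mul_eq_zero, mul_eq_zero, or_comm (a := deriv R (ψ₁ t) = 0)]

theorem deriv_eq_zero_or_deriv_eq_zero_of_add_phaseDensity_eq_zero (hX : AnalyticOnNhd ℝ X univ)
    (hY : AnalyticOnNhd ℝ Y univ) (hR : R = X ^ 2 + Y ^ 2) (h₁ : IsInverseBranch X ψ₁ s₁ U)
    (h₂ : IsInverseBranch X ψ₂ s₂ U) (hUc : IsConnected U) (hk : k ≠ 0)
    (hYne : ∀ t ∈ U, Y (ψ₁ t) ≠ Y (ψ₂ t))
    (hbal : ∀ t ∈ U,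
      |deriv ψ₁ t| • phaseDensity k R Y (ψ₁ t) + |deriv ψ₂ t| • phaseDensity k R Y (ψ₂ t) = 0) :
    (∀ φ, deriv R φ = 0) ∨ ∀ φ, deriv Y φ = 0 := by
  have hRan : AnalyticOnNhd ℝ R univ := hR ▸ (hX.pow 2).add (hY.pow 2)
  have hXd : Differentiable ℝ X := fun x ↦ (hX x trivial).differentiableAt
  have hRd : Differentiable ℝ R := fun x ↦ (hRan x trivial).differentiableAt
  have hcomp {F ψ : ℝ → ℝ} {s : Set ℝ} (hF : AnalyticOnNhd ℝ F univ)
      (h : IsInverseBranch X ψ s U) : AnalyticOnNhd ℝ (F ∘ ψ) U :=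
    hF.comp h.analyticOnNhd (mapsTo_univ _ _)
  have hRY : ∀ t ∈ U, R (ψ₁ t) - R (ψ₂ t) = Y (ψ₁ t) ^ 2 - Y (ψ₂ t) ^ 2 := fun t ht ↦ by
    simp only [hR, Pi.add_apply, Pi.pow_apply, h₁.rightInvOn ht, h₂.rightInvOn ht]
    ring
  have hphase t (ht : t ∈ U) := h₁.sq_deriv_comp_eq_and_mul_sin_eq_zero h₂ hRd ht (hbal t ht)
  rcases deriv_eq_zero_or_exists_deriv_eq_const_mul h₁.isOpen_target hUc.isPreconnected
    (hcomp hRan h₁) (hcomp hRan h₂) (hcomp hY h₁) (hcomp hY h₂) hk hYne hRY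
    (fun t ht ↦ (hphase t ht).1) fun t ht ↦ (hphase t ht).2 with hR₁ | hY₁ | ⟨c, hc, hRY₁, hRY₂⟩
  · refine .inl fun φ ↦ ?_
    simpa using h₁.deriv_eq_const_mul_deriv hUc.nonempty hXd hRan hRan (c := 0)
      (by simpa using hR₁) φ
  · refine .inr fun φ ↦ ?_
    simpa using h₁.deriv_eq_const_mul_deriv hUc.nonempty hXd hY hY (c := 0)
      (by simpa using hY₁) φ
  · refine .inr fun φ ↦ ?_
    have hR₁ := h₁.deriv_eq_const_mul_deriv hUc.nonempty hXd hRan hY hRY₁ φ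
    have hR₂ := h₂.deriv_eq_const_mul_deriv hUc.nonempty hXd hRan hY hRY₂ φ
    refine (mul_eq_zero.1 ?_).resolve_left hc
    linear_combination (hR₂ - hR₁) / 2

theorem deriv_eq_zero_or_deriv_eq_zero_of_setIntegral_pow_smul_phaseDensity_eq_zero
    (hX : AnalyticOnNhd ℝ X univ) (hY : AnalyticOnNhd ℝ Y univ) (hR : R = X ^ 2 + Y ^ 2)
    (h₁ : IsInverseBranch X ψ₁ s₁ U) (h₂ : IsInverseBranch X ψ₂ s₂ U)
    (hs : Disjoint s₁ s₂) (hbdd : Bornology.IsBounded (s₁ ∪ s₂)) (hUc : IsConnected U)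
    (hk : k ≠ 0) (hYne : ∀ t ∈ U, Y (ψ₁ t) ≠ Y (ψ₂ t))
    (hmom : ∀ j : ℕ, ∫ φ in s₁ ∪ s₂, X φ ^ j • phaseDensity k R Y φ = 0) :
    (∀ φ, deriv R φ = 0) ∨ ∀ φ, deriv Y φ = 0 := by
  have hXc : Continuous X := continuousOn_univ.1 hX.continuousOn
  have hYc : Continuous Y := continuousOn_univ.1 hY.continuousOn
  have hR'c : Continuous (deriv R) :=
    continuousOn_univ.1 (hR ▸ (hX.pow 2).add (hY.pow 2)).deriv.continuousOn
  have hHc : Continuous (phaseDensity k R Y) := by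
    unfold phaseDensity
    fun_prop
  have hHs : IntegrableOn (phaseDensity k R Y) (s₁ ∪ s₂) :=
    (hHc.continuousOn.integrableOn_compact hbdd.isCompact_closure).mono_set subset_closure
  obtain ⟨C, hC⟩ := hbdd.isCompact_closure.exists_bound_of_continuousOn hXc.continuousOn
  exact deriv_eq_zero_or_deriv_eq_zero_of_add_phaseDensity_eq_zero hX hY hR h₁ h₂ hUc hk hYne
    fun t ht ↦ h₁.abs_deriv_smul_add_abs_deriv_smul_eq_zero h₂ hs hXc
      (fun φ hφ ↦ hC φ (subset_closure hφ)) hHc hHs hmom ht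

end Curve

lemma setIntegral_Ioo_union_Ioo {E : Type*} [NormedAddCommGroup E] [NormedSpace ℝ E]
    {F : ℝ → E} {a b d : ℝ} (hab : a ≤ b) (hbd : b ≤ d) :
    ∫ x in Ioo a b ∪ Ioo b d, F x = ∫ x in a..d, F x := by
  rw [intervalIntegral.integral_of_le (hab.trans hbd), ← Ioc_union_Ioc_eq_Ioc hab hbd]
  exact setIntegral_congr_set (Ioo_ae_eq_Ioc.union Ioo_ae_eq_Ioc)

section Polar

variable {f : ℝ → ℝ} {c k : ℝ}

lemma eq_of_cos_eq_zero_of_abs_sub_lt_pi {φ : ℝ} (hc : cos c = 0) (hφ : cos φ = 0)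
    (hφc : |φ - c| < π) : φ = c := by
  have hsin : sin (φ - c) = 0 := by rw [sin_sub, hc, hφ, mul_zero, zero_mul, sub_zero]
  obtain ⟨h₁, h₂⟩ := abs_lt.1 hφc
  exact sub_eq_zero.1 ((sin_eq_zero_iff_of_lt_of_lt h₁ h₂).1 hsin)

theorem exists_isInverseBranch_mul_cos (hf : AnalyticOnNhd ℝ f univ) (hf0 : ∀ φ, f φ ≠ 0)
    (hc : cos c = 0) :
    ∃ ψ, ∃ U ∈ 𝓝 0, IsInverseBranch (fun φ ↦ f φ * cos φ) ψ (Ioo (c - π / 2) (c + π / 2)) U := by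
  have hX : AnalyticOnNhd ℝ (fun φ ↦ f φ * cos φ) univ := hf.mul analyticOnNhd_cos
  have hderiv : deriv (fun φ ↦ f φ * cos φ) c = -(f c * sin c) := by
    rw [((hf c trivial).differentiableAt.hasDerivAt.fun_mul (hasDerivAt_cos c)).deriv, hc]
    ring
  have hsin : sin c ≠ 0 := fun hs ↦ by simpa [hc, hs] using sin_sq_add_cos_sq c
  have hzero : f c * cos c = 0 := by rw [hc, mul_zero]
  have hpi := pi_div_two_pos
  rw [← hzero]
  refine exists_isInverseBranch isCompact_Icc (hX.continuousOn.mono (subset_univ _)) isOpen_Ioo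
    Ioo_subset_Icc_self ⟨by linarith, by linarith⟩ (hX c trivial)
    (hderiv ▸ neg_ne_zero.2 (mul_ne_zero (hf0 c) hsin)) fun φ hφ hφc ↦ ?_
  have hcos : cos φ = 0 := (mul_eq_zero.1 (hφc.trans hzero)).resolve_left (hf0 φ)
  exact eq_of_cos_eq_zero_of_abs_sub_lt_pi hc hcos
    (abs_lt.2 ⟨by linarith [hφ.1], by linarith [hφ.2]⟩)

theorem exists_isInverseBranch_mul_cos_Ioo (hf : AnalyticOnNhd ℝ f univ)
    (hf0 : ∀ φ, f φ ≠ 0) : ∃ U, IsConnected U ∧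
      (∃ ψ, IsInverseBranch (fun φ ↦ f φ * cos φ) ψ (Ioo 0 π) U) ∧
      ∃ ψ, IsInverseBranch (fun φ ↦ f φ * cos φ) ψ (Ioo (-π) 0) U := by
  obtain ⟨ψ₁, U₁, hU₁, h₁⟩ := exists_isInverseBranch_mul_cos hf hf0 cos_pi_div_two
  obtain ⟨ψ₂, U₂, hU₂, h₂⟩ := exists_isInverseBranch_mul_cos hf hf0
    (show cos (-(π / 2)) = 0 by rw [cos_neg, cos_pi_div_two])
  obtain ⟨ε, hε, hεU⟩ := Metric.mem_nhds_iff.1 (inter_mem hU₁ hU₂)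
  obtain ⟨hεU₁, hεU₂⟩ := subset_inter_iff.1 hεU
  rw [sub_self, add_halves] at h₁
  rw [neg_add_cancel, show -(π / 2) - π / 2 = -π by ring] at h₂
  exact ⟨Metric.ball 0 ε, Metric.isConnected_ball hε, ⟨ψ₁, h₁.mono Metric.isOpen_ball hεU₁⟩,
    ψ₂, h₂.mono Metric.isOpen_ball hεU₂⟩

theorem deriv_sq_eq_zero_or_deriv_mul_sin_eq_zero (hf : AnalyticOnNhd ℝ f univ)
    (hpos : ∀ φ, 0 < f φ) (hk : k ≠ 0)
    (hmom : ∀ j : ℕ, ∫ φ in -π..π,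
      (f φ * cos φ) ^ j • phaseDensity k (f ^ 2) (fun φ ↦ f φ * sin φ) φ = 0) :
    (∀ φ, deriv (f ^ 2) φ = 0) ∨ ∀ φ, deriv (fun φ ↦ f φ * sin φ) φ = 0 := by
  obtain ⟨U, hU, ⟨ψ₁, h₁⟩, ψ₂, h₂⟩ := exists_isInverseBranch_mul_cos_Ioo hf fun φ ↦ (hpos φ).ne'
  have hR : f ^ 2 = (fun φ ↦ f φ * cos φ) ^ 2 + (fun φ ↦ f φ * sin φ) ^ 2 := by
    ext φ
    simp only [Pi.pow_apply, Pi.add_apply]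
    linear_combination -f φ ^ 2 * sin_sq_add_cos_sq φ
  have hdisj : Disjoint (Ioo 0 π) (Ioo (-π) 0) :=
    disjoint_left.2 fun φ h h' ↦ h.1.not_gt h'.2
  have hbdd : Bornology.IsBounded (Ioo 0 π ∪ Ioo (-π) 0) :=
    (Metric.isBounded_Ioo ..).union (Metric.isBounded_Ioo ..)
  refine deriv_eq_zero_or_deriv_eq_zero_of_setIntegral_pow_smul_phaseDensity_eq_zero
    (hf.mul analyticOnNhd_cos) (hf.mul analyticOnNhd_sin) hR h₁ h₂ hdisj hbdd hU hk
    (fun t ht ↦ ne_of_gt ?_) fun j ↦ ?_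
  · have hneg := mul_neg_of_pos_of_neg (hpos (ψ₂ t))
      (sin_neg_of_neg_of_neg_pi_lt (h₂.mapsTo ht).2 (h₂.mapsTo ht).1)
    exact hneg.trans (mul_pos (hpos _) (sin_pos_of_mem_Ioo (h₁.mapsTo ht)))
  · rw [union_comm, setIntegral_Ioo_union_Ioo (neg_nonpos.2 pi_nonneg) pi_nonneg, hmom]

lemma deriv_mul_self_mul_pow_mul_exp_eq_smul_phaseDensity (hf : Differentiable ℝ f) (j : ℕ)
    (φ : ℝ) :
    ((deriv f φ * f φ : ℝ) : ℂ) * ((k * f φ * cos φ : ℝ) : ℂ) ^ j *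
        Complex.exp (Complex.I * (k * f φ * sin φ : ℝ)) =
      (k ^ j / 2) • (f φ * cos φ) ^ j • phaseDensity k (f ^ 2) (fun φ ↦ f φ * sin φ) φ := by
  rw [phaseDensity, ((hf φ).hasDerivAt.pow 2).deriv, mul_assoc k, mul_assoc k]
  simp only [Complex.real_smul]
  push_cast
  ring

end Polar

theorem constant_of_all_moment_conditions_general (f : ℝ → ℝ) (hf_an : ∀ x : ℝ, AnalyticAt ℝ f x)
    (hpos : ∀ φ, 0 < f φ) (k : ℝ) (hk : k ≠ 0)
    (hmom : ∀ j : ℕ,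
      ∫ φ in (-π)..π, ((deriv f φ * f φ : ℝ) : ℂ) *
        ((k * f φ * Real.cos φ : ℝ) : ℂ) ^ j *
        Complex.exp (Complex.I * ((k * f φ * Real.sin φ : ℝ) : ℂ)) = 0) :
    ∃ c : ℝ, ∀ φ, f φ = c := by
  have hf : Differentiable ℝ f := fun x ↦ (hf_an x).differentiableAt
  have hmom' (j : ℕ) : ∫ φ in -π..π,
      (f φ * cos φ) ^ j • phaseDensity k (f ^ 2) (fun φ ↦ f φ * sin φ) φ = 0 := by
    have hj := hmom j
    simp_rw [deriv_mul_self_mul_pow_mul_exp_eq_smul_phaseDensity hf,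
      intervalIntegral.integral_smul] at hj
    exact (smul_eq_zero.1 hj).resolve_left (div_ne_zero (pow_ne_zero _ hk) two_ne_zero)
  rcases deriv_sq_eq_zero_or_deriv_mul_sin_eq_zero (fun x _ ↦ hf_an x) hpos hk hmom' with hR | hY
  · refine ⟨f 0, fun φ ↦ (pow_left_inj₀ (hpos φ).le (hpos 0).le two_ne_zero).1 ?_⟩
    exact is_const_of_deriv_eq_zero (hf.pow 2) hR φ 0
  · have hYconst : f (π / 2) * sin (π / 2) = f 0 * sin 0 :=
      is_const_of_deriv_eq_zero (hf.mul differentiable_sin) hY (π / 2) 0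
    rw [sin_pi_div_two, sin_zero, mul_one, mul_zero] at hYconst
    exact absurd hYconst (hpos _).ne'

/-- If `f` is a real-analytic `2π`-periodic positive function, `k > 0`, and the moment
conditions `∫_{-π}^{π} f'(φ) f(φ) (k f(φ) cos φ)^j e^{ik f(φ) sin φ} dφ = 0` hold for
every integer `j ≥ 0`, then `f` is constant. -/
theorem constant_of_all_moment_conditions
    (f : ℝ → ℝ) (hf_an : ∀ x : ℝ, AnalyticAt ℝ f x)
    (hper : Function.Periodic f (2 * π))
    (hpos : ∀ φ, 0 < f φ)
    (k : ℝ) (hk : 0 < k)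
    (hmom : ∀ j : ℕ,
      ∫ φ in (-π)..π, ((deriv f φ * f φ : ℝ) : ℂ) *
        ((k * f φ * Real.cos φ : ℝ) : ℂ) ^ j *
        Complex.exp (Complex.I * ((k * f φ * Real.sin φ : ℝ) : ℂ)) = 0) :
    ∃ c : ℝ, ∀ φ, f φ = c :=
  constant_of_all_moment_conditions_general f hf_an hpos k hk.ne' hmom
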